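/- Let A be an invertible real 2×2 matrix all of whose (complex) eigenvalues have modulus strictly greater than 1, and let S ⊆ ℝ² be compact. Then there exists K ∈ ℕ such that for all k ≥ K and all n₁, n₂ ∈ ℤ²: if (A^k n₁ + S) ∩ (A^k n₂ + S) ≠ ∅ then n₁ = n₂. In particular, for all k ≥ K the translates of S by the lattice A^k ℤ² are pairwise disjoint. -/

import Mathlib

open Set

open Filter Topology
open scoped NNReal ENNReal Matrix

/-- In a complex Banach algebra, the powers of an element of spectral radius less than one tend
to zero. -/
theorem tendsto_pow_atTop_nhds_zero_of_spectralRadius_lt_one {B : Type*} [NormedRing B]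
    [NormedAlgebra ℂ B] [CompleteSpace B] {a : B} (ha : spectralRadius ℂ a < 1) :
    Tendsto (fun n : ℕ => a ^ n) atTop (𝓝 0) := by
  obtain ⟨r, har, hr⟩ := ENNReal.lt_iff_exists_nnreal_btwn.mp ha
  have hr' : r < 1 := by exact_mod_cast hr
  refine squeeze_zero_norm' ?_ (tendsto_pow_atTop_nhds_zero_of_lt_one r.coe_nonneg hr')
  have hlim := spectrum.pow_nnnorm_pow_one_div_tendsto_nhds_spectralRadius a
  filter_upwards [hlim.eventually_lt_const har, eventually_gt_atTop 0] with n hn hpos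
  have hpos' : (0 : ℝ) < n := by exact_mod_cast hpos
  rw [one_div, ENNReal.rpow_inv_lt_iff hpos', ENNReal.rpow_natCast] at hn
  exact_mod_cast hn.le

/-- In a nontrivial complex Banach algebra, the powers of the inverse of a unit whose spectrum lies
outside the closed unit disc tend to zero. -/
theorem Units.tendsto_inv_pow_atTop_nhds_zero {B : Type*} [NormedRing B] [NormedAlgebra ℂ B]
    [CompleteSpace B] [Nontrivial B] (u : Bˣ) (hu : ∀ z ∈ spectrum ℂ (u : B), 1 < ‖z‖) :
    Tendsto (fun n : ℕ => (↑u⁻¹ : B) ^ n) atTop (𝓝 0) := by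
  apply tendsto_pow_atTop_nhds_zero_of_spectralRadius_lt_one
  refine spectrum.spectralRadius_lt_of_forall_lt (r := 1) _ fun z hz => ?_
  have h := hu z⁻¹ (spectrum.inv₀_mem_inv_iff.mp (by simpa using hz))
  rw [norm_inv] at h
  exact_mod_cast (one_lt_inv_iff₀.mp h).2

open scoped Matrix.Norms.Operator in
/-- If all complex eigenvalues of a real matrix have modulus greater than one, the powers of its
inverse are eventually arbitrarily strong contractions. -/
theorem Matrix.eventually_norm_inv_pow_mulVec_le {m : Type*} [Fintype m] [DecidableEq m]
    [Nonempty m] {A : Matrix m m ℝ} (hA : IsUnit A)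
    (heig : ∀ z ∈ spectrum ℂ (A.map (Complex.ofReal : ℝ → ℂ)), 1 < ‖z‖) {ε : ℝ} (hε : 0 < ε) :
    ∀ᶠ k : ℕ in atTop, ∀ v : m → ℝ, ‖(A⁻¹ ^ k) *ᵥ v‖ ≤ ε * ‖v‖ := by
  obtain ⟨u, rfl⟩ := hA
  let φ : Matrix m m ℝ →+* Matrix m m ℂ := Complex.ofRealHom.mapMatrix
  have hφ (M : Matrix m m ℝ) : ‖φ M‖ = ‖M‖ := by
    simp [φ, Matrix.linfty_opNorm_def]
  have h := (Units.map (φ : Matrix m m ℝ →* Matrix m m ℂ) u).tendsto_inv_pow_atTop_nhds_zero heig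
  filter_upwards [h.norm.eventually_le_const (by simpa using hε)] with k hk v
  rw [← map_inv, Units.coe_map, MonoidHom.coe_coe, ← map_pow, hφ, Matrix.coe_units_inv] at hk
  exact (Matrix.linfty_opNorm_mulVec _ v).trans (by gcongr)

/-- If `A` is an invertible real `2×2` matrix all of whose complex
eigenvalues have modulus `> 1`, and `S ⊆ ℝ²` is compact, then there exists `K` such that
for all `k ≥ K` the translates of `S` by the lattice `A^k ℤ²` are pairwise disjoint:
if `(A^k n₁ + S) ∩ (A^k n₂ + S) ≠ ∅` then `n₁ = n₂`. -/
theorem expansive_matrix_separates_translates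
    (A : Matrix (Fin 2) (Fin 2) ℝ) (hA : IsUnit A)
    (heig : ∀ z ∈ spectrum ℂ (A.map (Complex.ofReal : ℝ → ℂ)), 1 < ‖z‖)
    (S : Set (Fin 2 → ℝ)) (hS : IsCompact S) :
    ∃ K : ℕ, ∀ k ≥ K, ∀ n₁ n₂ : Fin 2 → ℤ,
      (((fun s => (A ^ k).mulVec (fun i => (n₁ i : ℝ)) + s) '' S) ∩
        ((fun s => (A ^ k).mulVec (fun i => (n₂ i : ℝ)) + s) '' S)).Nonempty →
      n₁ = n₂ := by
  obtain ⟨R, hR, hSR⟩ := hS.isBounded.exists_pos_norm_le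
  obtain ⟨K, hK⟩ := eventually_atTop.mp
    (Matrix.eventually_norm_inv_pow_mulVec_le hA heig (ε := 1 / (4 * R)) (by positivity))
  refine ⟨K, fun k hk n₁ n₂ => ?_⟩
  rintro ⟨_, ⟨s, hs, rfl⟩, t, ht, hst⟩
  have hdet : IsUnit A.det := (Matrix.isUnit_iff_isUnit_det A).mp hA
  have hdiff : (A ^ k) *ᵥ (fun i => ((n₁ i - n₂ i : ℤ) : ℝ)) = t - s := by
    have hsub : (fun i => ((n₁ i - n₂ i : ℤ) : ℝ)) =
        (fun i => (n₁ i : ℝ)) - fun i => (n₂ i : ℝ) := by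
      ext i
      simp
    rw [hsub, Matrix.mulVec_sub, sub_eq_sub_iff_add_eq_add, add_comm t]
    exact hst.symm
  have hinv : (fun i => ((n₁ i - n₂ i : ℤ) : ℝ)) = (A⁻¹ ^ k) *ᵥ (t - s) := by
    rw [← hdiff, Matrix.mulVec_mulVec, Matrix.inv_pow',
      Matrix.nonsing_inv_mul _ (by rw [Matrix.det_pow]; exact hdet.pow k), Matrix.one_mulVec]
  have hsmall : ‖fun i => ((n₁ i - n₂ i : ℤ) : ℝ)‖ < 1 := by
    rw [hinv]
    calc ‖(A⁻¹ ^ k) *ᵥ (t - s)‖ ≤ 1 / (4 * R) * ‖t - s‖ := hK k hk _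
      _ ≤ 1 / (4 * R) * (R + R) := by
        gcongr
        exact (norm_sub_le t s).trans (add_le_add (hSR t ht) (hSR s hs))
      _ < 1 := by
        field_simp
        norm_num
  ext i
  have hi := (norm_le_pi_norm (fun i => ((n₁ i - n₂ i : ℤ) : ℝ)) i).trans_lt hsmall
  rw [Real.norm_eq_abs, ← Int.cast_abs] at hi
  exact sub_eq_zero.mp (Int.abs_lt_one_iff.mp (by exact_mod_cast hi))
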